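/- Fix integers 0 ≤ c_min < c_max and a block-tuple M = (m_{c_min}, …, m_{c_max}) with m_{c_max−1} = 1. The map replacing the last set S_k by S_k ∖ {c_max} is a bijection from the set of valid tuples S = (S_1, …, S_k) for M with c_max ∈ S_k and |S_k| ≥ 2 onto the set of all valid tuples for M'; its inverse replaces the last set S'_k of a valid tuple for M' by S'_k ∪ {c_max}. -/

import Mathlib

/-- `M` is a block-tuple on `{cmin, …, cmax}`: each entry is a positive odd integer. -/
def IsBlockTuple (cmin cmax : ℕ) (M : ℕ → ℕ) : Prop :=
  ∀ c ∈ Finset.Icc cmin cmax, 0 < M c ∧ Odd (M c)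

/-- `S = (S_1, …, S_k)` is a valid tuple for the block-tuple `M` on `{cmin, …, cmax}`:
(1) each `S_i` is a nonempty set of consecutive integers;
(2) the union of the `S_i` is `{cmin, …, cmax}`;
(3) if `i < j`, `s ∈ S_i`, `t ∈ S_j` then `s ≤ t`;
(4) if `i < j` and `c ∈ S_i ∩ S_j` then `j = i + 1`, `|S_j| ≥ 2` and `m_c > 1`;
(5) if `i ≥ 2` (1-indexed), `|S_i| ≥ 2` and `c = min S_i` has `m_c > 1`, then `c ∈ S_{i-1}`. -/
def IsValidTuple (cmin cmax : ℕ) (M : ℕ → ℕ) (S : List (Finset ℕ)) : Prop :=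
  (∀ i : Fin S.length, ∃ a b : ℕ, a ≤ b ∧ S.get i = Finset.Icc a b) ∧
  (∀ c : ℕ, c ∈ Finset.Icc cmin cmax ↔ ∃ i : Fin S.length, c ∈ S.get i) ∧
  (∀ i j : Fin S.length, i < j → ∀ s ∈ S.get i, ∀ t ∈ S.get j, s ≤ t) ∧
  (∀ i j : Fin S.length, i < j → ∀ c : ℕ, c ∈ S.get i → c ∈ S.get j →
    (j : ℕ) = (i : ℕ) + 1 ∧ 2 ≤ (S.get j).card ∧ 1 < M c) ∧
  (∀ i : Fin S.length, 1 ≤ (i : ℕ) → 2 ≤ (S.get i).card →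
    ∀ c : ℕ, c ∈ S.get i → (∀ x ∈ S.get i, c ≤ x) → 1 < M c →
    ∃ j : Fin S.length, (j : ℕ) + 1 = (i : ℕ) ∧ c ∈ S.get j)

/-!
A valid tuple on `{cmin, …, b}` ends in an interval `[a, b]`. Given that the earlier sets lie weakly
below `a`, such a tuple is valid or not according to those sets, to `a`, and to the truth value of
`a < b ∧ 1 < m_a`, which decides whether `a` also belongs to the preceding set. When `m_d = 1`, this
truth value is the same for `b = d` and `b = d + 1` as soon as `a ≤ d`, so `[a, d]` and `[a, d + 1]`
can be exchanged as last sets.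
-/

theorem getElem?_append_singleton_eq_some_iff {α : Type*} {l : List α} {x y : α} {i : ℕ} :
    (l ++ [x])[i]? = some y ↔ l[i]? = some y ∨ i = l.length ∧ x = y := by
  grind

theorem forall_mem_Icc_le_iff {α : Type*} [Preorder α] [LocallyFiniteOrder α] {a b s : α}
    (hab : a ≤ b) : (∀ t ∈ Finset.Icc a b, s ≤ t) ↔ s ≤ a :=
  ⟨fun h => h a (Finset.left_mem_Icc.2 hab), fun h _ ht => h.trans (Finset.mem_Icc.1 ht).1⟩

theorem two_le_card_Icc_iff {a b : ℕ} : 2 ≤ (Finset.Icc a b).card ↔ a < b := by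
  rw [Nat.card_Icc]
  lia

section Overlaps

/-- Condition (4) on a tuple: two of its sets meet only if they are adjacent, the later one has at
least two elements, and each common element `c` has `m_c > 1`. Indexing by
`S[i]?` rather than `Fin S.length` lets indices of `l` and `l ++ [L]` be compared directly. -/
def HasAdmissibleOverlaps (M : ℕ → ℕ) (S : List (Finset ℕ)) : Prop :=
  ∀ ⦃i j A B⦄, i < j → S[i]? = some A → S[j]? = some B →
    ∀ c ∈ A, c ∈ B → j = i + 1 ∧ 2 ≤ B.card ∧ 1 < M c

/-- Condition (5) on a tuple: the minimum `c` of a set with at least two elements also belongs to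
the preceding set, if there is one and `m_c > 1`. Sets are indexed by `S[i]?` as in
`HasAdmissibleOverlaps`. -/
def HasForcedOverlaps (M : ℕ → ℕ) (S : List (Finset ℕ)) : Prop :=
  ∀ ⦃i A B⦄, S[i]? = some A → S[i + 1]? = some B →
    2 ≤ B.card → ∀ c ∈ B, (∀ x ∈ B, c ≤ x) → 1 < M c → c ∈ A

variable {M : ℕ → ℕ} {S l : List (Finset ℕ)}

theorem hasAdmissibleOverlaps_iff_get : HasAdmissibleOverlaps M S ↔
    ∀ i j : Fin S.length, i < j → ∀ c : ℕ, c ∈ S.get i → c ∈ S.get j →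
      (j : ℕ) = (i : ℕ) + 1 ∧ 2 ≤ (S.get j).card ∧ 1 < M c := by
  constructor
  · intro h i j hij
    exact h hij (List.getElem?_eq_getElem i.2) (List.getElem?_eq_getElem j.2)
  · intro h i j A B hij hA hB
    obtain ⟨hi, rfl⟩ := List.getElem?_eq_some_iff.1 hA
    obtain ⟨hj, rfl⟩ := List.getElem?_eq_some_iff.1 hB
    exact h ⟨i, hi⟩ ⟨j, hj⟩ hij

theorem hasForcedOverlaps_iff_get : HasForcedOverlaps M S ↔
    ∀ i : Fin S.length, 1 ≤ (i : ℕ) → 2 ≤ (S.get i).card →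
      ∀ c : ℕ, c ∈ S.get i → (∀ x ∈ S.get i, c ≤ x) → 1 < M c →
      ∃ j : Fin S.length, (j : ℕ) + 1 = (i : ℕ) ∧ c ∈ S.get j := by
  constructor
  · rintro h ⟨i, hi⟩ hpos hcard c hc hmin hMc
    obtain ⟨j, rfl⟩ := Nat.exists_eq_add_one.2 hpos
    exact ⟨⟨j, by lia⟩, rfl, h (List.getElem?_eq_getElem (by lia)) (List.getElem?_eq_getElem hi)
      hcard c hc hmin hMc⟩
  · intro h i A B hA hB hcard c hc hmin hMc
    obtain ⟨hi, rfl⟩ := List.getElem?_eq_some_iff.1 hA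
    obtain ⟨hj, rfl⟩ := List.getElem?_eq_some_iff.1 hB
    obtain ⟨j, hji, hcj⟩ := h ⟨i + 1, hj⟩ (by simp) hcard c hc hmin hMc
    obtain rfl : (j : ℕ) = i := Nat.succ_injective hji
    exact hcj

theorem hasAdmissibleOverlaps_append_singleton {L : Finset ℕ} :
    HasAdmissibleOverlaps M (l ++ [L]) ↔ HasAdmissibleOverlaps M l ∧
      ∀ i A, l[i]? = some A → ∀ c ∈ A, c ∈ L → i + 1 = l.length ∧ 2 ≤ L.card ∧ 1 < M c := by
  simp only [HasAdmissibleOverlaps, getElem?_append_singleton_eq_some_iff]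
  grind

theorem hasForcedOverlaps_append_singleton {L : Finset ℕ} :
    HasForcedOverlaps M (l ++ [L]) ↔ HasForcedOverlaps M l ∧
      ∀ A ∈ l.getLast?, 2 ≤ L.card → ∀ c ∈ L, (∀ x ∈ L, c ≤ x) → 1 < M c → c ∈ A := by
  simp only [HasForcedOverlaps, getElem?_append_singleton_eq_some_iff]
  grind

variable {a b : ℕ}

theorem hasAdmissibleOverlaps_append_Icc (hab : a ≤ b) (hle : ∀ A ∈ l, ∀ s ∈ A, s ≤ a) :
    HasAdmissibleOverlaps M (l ++ [Finset.Icc a b]) ↔ HasAdmissibleOverlaps M l ∧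
      ∀ i A, l[i]? = some A → a ∈ A → i + 1 = l.length ∧ a < b ∧ 1 < M a := by
  have common_eq : ∀ {i A c}, l[i]? = some A → c ∈ A → c ∈ Finset.Icc a b → c = a :=
    fun hA hcA hc => le_antisymm (hle _ (List.mem_of_getElem? hA) _ hcA) (Finset.mem_Icc.1 hc).1
  rw [hasAdmissibleOverlaps_append_singleton, two_le_card_Icc_iff]
  refine and_congr_right fun _ => ⟨fun h i A hA ha => ?_, fun h i A hA c hcA hc => ?_⟩
  · exact h i A hA a ha (Finset.left_mem_Icc.2 hab)
  · obtain rfl := common_eq hA hcA hc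
    exact h i A hA hcA

theorem hasForcedOverlaps_append_Icc (hab : a ≤ b) :
    HasForcedOverlaps M (l ++ [Finset.Icc a b]) ↔ HasForcedOverlaps M l ∧
      (a < b ∧ 1 < M a → ∀ A ∈ l.getLast?, a ∈ A) := by
  rw [hasForcedOverlaps_append_singleton, two_le_card_Icc_iff]
  refine and_congr_right fun _ => ⟨fun h hlink A hA => ?_, fun h A hA hlt c hc hmin hMc => ?_⟩
  · exact h A hA hlink.1 a (Finset.left_mem_Icc.2 hab) ((forall_mem_Icc_le_iff hab).2 le_rfl)
      hlink.2
  · obtain rfl := le_antisymm ((forall_mem_Icc_le_iff hab).1 hmin) (Finset.mem_Icc.1 hc).1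
    exact h ⟨hlt, hMc⟩ A hA

end Overlaps

section ValidTuple

variable {cmin cmax a b d : ℕ} {M : ℕ → ℕ} {S l : List (Finset ℕ)}

theorem isValidTuple_iff : IsValidTuple cmin cmax M S ↔
    (∀ A ∈ S, ∃ a b : ℕ, a ≤ b ∧ A = Finset.Icc a b) ∧
    (∀ c, c ∈ Finset.Icc cmin cmax ↔ ∃ A ∈ S, c ∈ A) ∧
    S.Pairwise (fun A B => ∀ s ∈ A, ∀ t ∈ B, s ≤ t) ∧
    HasAdmissibleOverlaps M S ∧ HasForcedOverlaps M S := by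
  refine and_congr ?_ (and_congr ?_ (and_congr ?_ (and_congr ?_ ?_)))
  · exact (List.forall_mem_iff_get
      (p := fun A => ∃ a b : ℕ, a ≤ b ∧ A = Finset.Icc a b)).symm
  · simp only [List.mem_iff_get, exists_exists_eq_and]
  · exact (List.pairwise_iff_get
      (R := fun A B : Finset ℕ => ∀ s ∈ A, ∀ t ∈ B, s ≤ t)).symm
  · exact hasAdmissibleOverlaps_iff_get.symm
  · exact hasForcedOverlaps_iff_get.symm

theorem covers_Icc_append_Icc_iff (hab : a ≤ b) (hle : ∀ A ∈ l, ∀ s ∈ A, s ≤ a) :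
    (∀ c, c ∈ Finset.Icc cmin b ↔ ∃ A ∈ l ++ [Finset.Icc a b], c ∈ A) ↔
      (∀ A ∈ l, ∀ s ∈ A, cmin ≤ s) ∧ cmin ≤ a ∧ ∀ c, cmin ≤ c → c < a → ∃ A ∈ l, c ∈ A := by
  have exists_mem_iff : ∀ c, (∃ A ∈ l ++ [Finset.Icc a b], c ∈ A) ↔
      (∃ A ∈ l, c ∈ A) ∨ a ≤ c ∧ c ≤ b := by
    simp only [List.mem_append, List.mem_singleton, or_and_right, exists_or, exists_eq_left,
      Finset.mem_Icc, implies_true]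
  simp only [exists_mem_iff, Finset.mem_Icc]
  constructor
  · intro hcov
    refine ⟨fun A hA s hs => ((hcov s).2 (.inl ⟨A, hA, hs⟩)).1,
      ((hcov a).2 (.inr ⟨le_rfl, hab⟩)).1, fun c hmin hca => ?_⟩
    exact ((hcov c).1 ⟨hmin, hca.le.trans hab⟩).resolve_right fun h => hca.not_ge h.1
  · rintro ⟨hmin, hmina, hbelow⟩ c
    constructor
    · rintro ⟨hc, hcb⟩
      exact (lt_or_ge c a).imp (hbelow c hc) fun hac => ⟨hac, hcb⟩
    · rintro (⟨A, hA, hcA⟩ | ⟨hac, hcb⟩)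
      · exact ⟨hmin A hA c hcA, (hle A hA c hcA).trans hab⟩
      · exact ⟨hmina.trans hac, hcb⟩

theorem isValidTuple_append_Icc_iff (hab : a ≤ b) :
    IsValidTuple cmin b M (l ++ [Finset.Icc a b]) ↔
      (∀ A ∈ l, ∃ a b : ℕ, a ≤ b ∧ A = Finset.Icc a b) ∧
      ((∀ A ∈ l, ∀ s ∈ A, cmin ≤ s) ∧ cmin ≤ a ∧ ∀ c, cmin ≤ c → c < a → ∃ A ∈ l, c ∈ A) ∧
      (l.Pairwise (fun A B => ∀ s ∈ A, ∀ t ∈ B, s ≤ t) ∧ ∀ A ∈ l, ∀ s ∈ A, s ≤ a) ∧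
      (HasAdmissibleOverlaps M l ∧
        ∀ i A, l[i]? = some A → a ∈ A → i + 1 = l.length ∧ a < b ∧ 1 < M a) ∧
      HasForcedOverlaps M l ∧ (a < b ∧ 1 < M a → ∀ A ∈ l.getLast?, a ∈ A) := by
  have pairwise_iff : (l ++ [Finset.Icc a b]).Pairwise (fun A B => ∀ s ∈ A, ∀ t ∈ B, s ≤ t) ↔
      l.Pairwise (fun A B => ∀ s ∈ A, ∀ t ∈ B, s ≤ t) ∧ ∀ A ∈ l, ∀ s ∈ A, s ≤ a := by
    simp only [List.pairwise_append, List.pairwise_singleton, List.forall_mem_singleton,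
      forall_mem_Icc_le_iff hab, true_and]
  have interval_iff : (∀ A ∈ l ++ [Finset.Icc a b], ∃ a b : ℕ, a ≤ b ∧ A = Finset.Icc a b) ↔
      ∀ A ∈ l, ∃ a b : ℕ, a ≤ b ∧ A = Finset.Icc a b := by
    rw [List.forall_mem_append, List.forall_mem_singleton]
    exact and_iff_left ⟨a, b, hab, rfl⟩
  rw [isValidTuple_iff, pairwise_iff, interval_iff]
  by_cases hle : ∀ A ∈ l, ∀ s ∈ A, s ≤ a
  · rw [covers_Icc_append_Icc_iff hab hle, hasAdmissibleOverlaps_append_Icc hab hle,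
      hasForcedOverlaps_append_Icc hab]
  · simp only [hle, and_false, false_and]

theorem isValidTuple_append_Icc_succ_iff (had : a ≤ d) (hd : M d ≤ 1) :
    IsValidTuple cmin (d + 1) M (l ++ [Finset.Icc a (d + 1)]) ↔
      IsValidTuple cmin d M (l ++ [Finset.Icc a d]) := by
  have ne_of_one_lt : 1 < M a → a ≠ d := by
    rintro hMa rfl
    exact hMa.not_ge hd
  have overlap_iff : a < d + 1 ∧ 1 < M a ↔ a < d ∧ 1 < M a := by lia
  rw [isValidTuple_append_Icc_iff (by lia), isValidTuple_append_Icc_iff had, overlap_iff]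

theorem exists_eq_append_Icc_of_isValidTuple (hS : IsValidTuple cmin cmax M S)
    (hc : cmin ≤ cmax) : ∃ l a, a ≤ cmax ∧ S = l ++ [Finset.Icc a cmax] := by
  obtain ⟨hint, hcov, hord, -, -⟩ := isValidTuple_iff.1 hS
  obtain ⟨A, hA, hcA⟩ := (hcov cmax).1 (Finset.right_mem_Icc.2 hc)
  obtain ⟨l, L, rfl⟩ : ∃ l L, S = l ++ [L] :=
    (List.eq_nil_or_concat' S).resolve_left (List.ne_nil_of_mem hA)
  obtain ⟨a, b, hab, rfl⟩ := hint L (by simp)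
  have b_le : b ≤ cmax :=
    (Finset.mem_Icc.1 ((hcov b).2 ⟨_, List.mem_concat_self, Finset.right_mem_Icc.2 hab⟩)).2
  have le_b : cmax ≤ b := by
    rcases List.mem_append.1 hA with hAl | hAL
    · exact (List.pairwise_append.1 hord).2.2 A hAl _ (by simp) cmax hcA b
        (Finset.right_mem_Icc.2 hab)
    · obtain rfl := List.mem_singleton.1 hAL
      exact (Finset.mem_Icc.1 hcA).2
  obtain rfl := le_antisymm b_le le_b
  exact ⟨l, a, hab, rfl⟩

theorem exists_eq_append_Icc_succ_of_isValidTuple (hS : IsValidTuple cmin (d + 1) M S)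
    (hd : cmin ≤ d + 1) (hcard : 2 ≤ (S.getLastD ∅).card) :
    ∃ l a, a ≤ d ∧ S = l ++ [Finset.Icc a (d + 1)] := by
  obtain ⟨l, a, -, rfl⟩ := exists_eq_append_Icc_of_isValidTuple hS hd
  rw [List.getLastD_concat, two_le_card_Icc_iff] at hcard
  exact ⟨l, a, Nat.le_of_lt_succ hcard, rfl⟩

end ValidTuple

theorem dropLast_append_getLastD_Icc_sdiff (l : List (Finset ℕ)) (a d : ℕ) :
    (l ++ [Finset.Icc a (d + 1)]).dropLast ++
      [(l ++ [Finset.Icc a (d + 1)]).getLastD ∅ \ {d + 1}] = l ++ [Finset.Icc a d] := by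
  have sdiff_eq : Finset.Icc a (d + 1) \ {d + 1} = Finset.Icc a d := by grind
  rw [List.dropLast_concat, List.getLastD_concat, sdiff_eq]

theorem dropLast_append_getLastD_Icc_union (l : List (Finset ℕ)) {a d : ℕ} (had : a ≤ d + 1) :
    (l ++ [Finset.Icc a d]).dropLast ++
      [(l ++ [Finset.Icc a d]).getLastD ∅ ∪ {d + 1}] = l ++ [Finset.Icc a (d + 1)] := by
  have union_eq : Finset.Icc a d ∪ {d + 1} = Finset.Icc a (d + 1) := by grind
  rw [List.dropLast_concat, List.getLastD_concat, union_eq]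

/-- Suppose `m_{cmax-1} = 1`. Replacing the last set `S_k` by `S_k \ {cmax}` is a
bijection from the valid tuples for `M` with `cmax ∈ S_k` and `|S_k| ≥ 2` onto the
set of all valid tuples for `M'`; its inverse replaces the last set `S'_k` of a
valid tuple for `M'` by `S'_k ∪ {cmax}`. -/
theorem bijOn_removeLastElement (cmin cmax : ℕ) (M : ℕ → ℕ)
    (hlt : cmin < cmax) (hM : IsBlockTuple cmin cmax M)
    (h1 : M (cmax - 1) = 1) :
    Set.BijOn
      (fun S : List (Finset ℕ) => S.dropLast ++ [S.getLastD ∅ \ {cmax}])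
      {S : List (Finset ℕ) | IsValidTuple cmin cmax M S ∧
        cmax ∈ S.getLastD ∅ ∧ 2 ≤ (S.getLastD ∅).card}
      {S' : List (Finset ℕ) | IsValidTuple cmin (cmax - 1) M S'} ∧
    Set.InvOn
      (fun S' : List (Finset ℕ) => S'.dropLast ++ [S'.getLastD ∅ ∪ {cmax}])
      (fun S : List (Finset ℕ) => S.dropLast ++ [S.getLastD ∅ \ {cmax}])
      {S : List (Finset ℕ) | IsValidTuple cmin cmax M S ∧
        cmax ∈ S.getLastD ∅ ∧ 2 ≤ (S.getLastD ∅).card}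
      {S' : List (Finset ℕ) | IsValidTuple cmin (cmax - 1) M S'} := by
  obtain ⟨d, rfl⟩ := Nat.exists_eq_add_one.2 (Nat.zero_lt_of_lt hlt)
  rw [Nat.add_sub_cancel] at h1 ⊢
  have hd : cmin ≤ d := Nat.le_of_lt_succ hlt
  refine ⟨Set.InvOn.bijOn ?invOn ?mapsTo ?mapsTo_inv, ?invOn⟩
  case invOn =>
    constructor
    · rintro S ⟨hS, -, hcard⟩
      obtain ⟨l, a, had, rfl⟩ := exists_eq_append_Icc_succ_of_isValidTuple hS hlt.le hcard
      simp only [dropLast_append_getLastD_Icc_sdiff,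
        dropLast_append_getLastD_Icc_union l (Nat.le_succ_of_le had)]
    · intro S' hS'
      obtain ⟨l, a, had, rfl⟩ := exists_eq_append_Icc_of_isValidTuple hS' hd
      simp only [dropLast_append_getLastD_Icc_union l (Nat.le_succ_of_le had),
        dropLast_append_getLastD_Icc_sdiff]
  case mapsTo =>
    rintro S ⟨hS, -, hcard⟩
    obtain ⟨l, a, had, rfl⟩ := exists_eq_append_Icc_succ_of_isValidTuple hS hlt.le hcard
    simp only [dropLast_append_getLastD_Icc_sdiff]
    exact (isValidTuple_append_Icc_succ_iff had h1.le).1 hS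
  case mapsTo_inv =>
    intro S' hS'
    obtain ⟨l, a, had, rfl⟩ := exists_eq_append_Icc_of_isValidTuple hS' hd
    simp only [dropLast_append_getLastD_Icc_union l (Nat.le_succ_of_le had)]
    refine ⟨(isValidTuple_append_Icc_succ_iff had h1.le).2 hS', ?_⟩
    rw [List.getLastD_concat, two_le_card_Icc_iff, Finset.right_mem_Icc]
    exact ⟨Nat.le_succ_of_le had, Nat.lt_succ_of_le had⟩
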